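/- Let |p|<1 and let t, b_1,…,b_n, a_1,…,a_n ∈ ℂ* with ∏_{k=1}^n a_k ≠ ∏_{k=1}^n b_k modulo integer powers of p, the a_r pairwise distinct modulo powers of p, and t/a_r ∉ {p^m : m ∈ ℤ}. Then ∏_{k=1}^n θ(t/b_k;p)/θ(t/a_k;p) = ∑_{r=1}^n [θ(t a_1⋯a_n/(a_r b_1⋯b_n);p) / (θ(t/a_r;p) θ(a_1⋯a_n/(b_1⋯b_n);p))] · [∏_{j=1}^n θ(a_r/b_j;p)] / [∏_{j≠r} θ(a_r/a_j;p)]. -/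

import Mathlib

noncomputable def qPochhammerInf (z q : ℂ) : ℂ := ∏' j : ℕ, (1 - z * q ^ j)

noncomputable def theta (z p : ℂ) : ℂ :=
  ∏' j : ℕ, (1 - z * p ^ j) * (1 - p ^ (j + 1) * z⁻¹)

noncomputable def ellGamma (z p q : ℂ) : ℂ :=
  ∏' jk : ℕ × ℕ,
    (1 - z⁻¹ * p ^ (jk.1 + 1) * q ^ (jk.2 + 1)) / (1 - z * p ^ jk.1 * q ^ jk.2)

open Filter Topology

section QPochhammer

variable {p : ℂ}

theorem summable_norm_mul_pow (hp : ‖p‖ < 1) (z : ℂ) : Summable fun j : ℕ ↦ ‖-(z * p ^ j)‖ := by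
  simpa using (summable_geometric_of_lt_one (norm_nonneg p) hp).mul_left ‖z‖

theorem multipliable_one_sub_mul_pow (hp : ‖p‖ < 1) (z : ℂ) :
    Multipliable fun j : ℕ ↦ 1 - z * p ^ j := by
  simpa [sub_eq_add_neg] using multipliable_one_add_of_summable (summable_norm_mul_pow hp z)

theorem qPochhammerInf_eq_mul (hp : ‖p‖ < 1) (z : ℂ) :
    qPochhammerInf z p = (1 - z) * qPochhammerInf (p * z) p := by
  have e : (fun j : ℕ ↦ 1 - z * p ^ (j + 1)) = fun j : ℕ ↦ 1 - p * z * p ^ j :=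
    funext fun j ↦ by ring
  rw [qPochhammerInf, tprod_eq_zero_mul' (e ▸ multipliable_one_sub_mul_pow hp (p * z)), e,
    qPochhammerInf, pow_zero, mul_one]

theorem qPochhammerInf_ne_zero (hp : ‖p‖ < 1) {z : ℂ} (hz : ∀ j : ℕ, z * p ^ j ≠ 1) :
    qPochhammerInf z p ≠ 0 := by
  have := tprod_one_add_ne_zero_of_summable (f := fun j : ℕ ↦ -(z * p ^ j))
    (fun j h ↦ hz j (by linear_combination -h)) (summable_norm_mul_pow hp z)
  simpa [qPochhammerInf, sub_eq_add_neg] using this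

theorem differentiable_qPochhammerInf (hp : ‖p‖ < 1) :
    Differentiable ℂ fun z ↦ qPochhammerInf z p := by
  intro z₀
  have hprod : HasProdLocallyUniformlyOn (fun (j : ℕ) (z : ℂ) ↦ 1 + -(z * p ^ j))
      (fun z ↦ ∏' j : ℕ, (1 + -(z * p ^ j))) (Metric.ball 0 (‖z₀‖ + 1)) := by
    refine Summable.hasProdLocallyUniformlyOn_nat_one_add (u := fun j ↦ (‖z₀‖ + 1) * ‖p‖ ^ j)
      Metric.isOpen_ball
      ((summable_geometric_of_lt_one (norm_nonneg p) hp).mul_left _) ?_ (fun j ↦ by fun_prop)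
    refine Eventually.of_forall fun j z hz ↦ ?_
    rw [norm_neg, norm_mul, norm_pow]
    have : ‖z‖ < ‖z₀‖ + 1 := by simpa using hz
    gcongr
  have hd := hprod.tendstoLocallyUniformlyOn_finsetRange.differentiableOn
    (Eventually.of_forall fun n ↦ by fun_prop) Metric.isOpen_ball
  simpa [qPochhammerInf, sub_eq_add_neg] using
    hd.differentiableAt (Metric.isOpen_ball.mem_nhds (x := z₀) (by simp))

end QPochhammer

section Theta

variable {p : ℂ}

theorem theta_eq_qPochhammerInf_mul (hp : ‖p‖ < 1) (z : ℂ) :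
    theta z p = qPochhammerInf z p * qPochhammerInf (p * z⁻¹) p := by
  rw [theta, qPochhammerInf, qPochhammerInf, ← (multipliable_one_sub_mul_pow hp z).tprod_mul
    (multipliable_one_sub_mul_pow hp _)]
  exact tprod_congr fun j ↦ by ring

theorem theta_one (hp : ‖p‖ < 1) : theta 1 p = 0 := by
  rw [theta_eq_qPochhammerInf_mul hp, qPochhammerInf_eq_mul hp]
  simp

theorem theta_mul_left (hp : ‖p‖ < 1) (hp0 : p ≠ 0) {z : ℂ} (hz : z ≠ 0) :
    theta (p * z) p = -z⁻¹ * theta z p := by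
  rcases eq_or_ne z 1 with rfl | hz1
  · rw [theta_one hp, theta_eq_qPochhammerInf_mul hp]
    have : p * (p * 1)⁻¹ = 1 := by field_simp
    rw [this, qPochhammerInf_eq_mul hp 1]
    ring
  · have h1 : p * (p * z)⁻¹ = z⁻¹ := by field_simp
    rw [theta_eq_qPochhammerInf_mul hp, theta_eq_qPochhammerInf_mul hp, h1,
      qPochhammerInf_eq_mul hp z, qPochhammerInf_eq_mul hp z⁻¹]
    field_simp
    ring

theorem exists_zpow_eq_of_theta_eq_zero (hp : ‖p‖ < 1) {z : ℂ} (hz : z ≠ 0)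
    (h : theta z p = 0) : ∃ m : ℤ, z = p ^ m := by
  by_contra! hne
  rw [theta_eq_qPochhammerInf_mul hp, mul_eq_zero] at h
  rcases h with h | h
  · refine qPochhammerInf_ne_zero hp (fun j hj ↦ hne (-j) ?_) h
    rw [zpow_neg, zpow_natCast]
    exact eq_inv_of_mul_eq_one_left hj
  · refine qPochhammerInf_ne_zero hp (fun j hj ↦ hne (j + 1 : ℕ) ?_) h
    rw [zpow_natCast, pow_succ]
    field_simp at hj
    linear_combination -hj

theorem differentiableAt_theta (hp : ‖p‖ < 1) {z : ℂ} (hz : z ≠ 0) :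
    DifferentiableAt ℂ (fun z ↦ theta z p) z := by
  simp only [theta_eq_qPochhammerInf_mul hp]
  exact (differentiable_qPochhammerInf hp z).mul
    ((differentiable_qPochhammerInf hp (p * z⁻¹)).fun_comp' z
      ((differentiableAt_inv hz).const_mul p))

theorem deriv_theta_one_ne_zero (hp : ‖p‖ < 1) : deriv (fun z ↦ theta z p) 1 ≠ 0 := by
  have hQ : qPochhammerInf p p ≠ 0 := qPochhammerInf_ne_zero hp fun j hj ↦ by
    rw [← pow_succ'] at hj
    have := congrArg norm hj
    rw [norm_pow, norm_one] at this
    exact (pow_lt_one₀ (norm_nonneg p) hp j.succ_ne_zero).ne this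
  set φ : ℂ → ℂ := fun z ↦ qPochhammerInf (p * z) p * qPochhammerInf (p * z⁻¹) p with hφ
  have hd : DifferentiableAt ℂ φ 1 :=
    ((differentiable_qPochhammerInf hp _).fun_comp' 1 (by fun_prop)).mul
      ((differentiable_qPochhammerInf hp _).fun_comp' 1
        ((differentiableAt_inv one_ne_zero).const_mul p))
  have heq : (fun z ↦ theta z p) = (fun z ↦ 1 - z) * φ := by
    ext z
    rw [Pi.mul_apply, theta_eq_qPochhammerInf_mul hp, qPochhammerInf_eq_mul hp, hφ]
    ring
  have h := (((hasDerivAt_id (1 : ℂ)).const_sub 1).mul hd.hasDerivAt).deriv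
  have h' : deriv (fun z ↦ theta z p) 1 = -φ 1 := by
    rw [heq]
    simpa using h
  rw [h']
  simp [hφ, hQ]

theorem mul_deriv_theta_mul_left (hp : ‖p‖ < 1) (hp0 : p ≠ 0) {z : ℂ} (hz : z ≠ 0)
    (h : theta z p = 0) :
    p * deriv (fun z ↦ theta z p) (p * z) = -z⁻¹ * deriv (fun z ↦ theta z p) z := by
  have h1 : HasDerivAt (fun w ↦ theta (p * w) p) (deriv (fun z ↦ theta z p) (p * z) * (p * 1)) z :=
    (differentiableAt_theta hp (mul_ne_zero hp0 hz)).hasDerivAt.comp z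
      ((hasDerivAt_id z).const_mul p)
  have h2 := ((hasDerivAt_inv hz).neg).mul (differentiableAt_theta hp hz).hasDerivAt
  have heq : (fun w ↦ theta (p * w) p) =ᶠ[𝓝 z] (-fun w ↦ w⁻¹) * fun w ↦ theta w p := by
    filter_upwards [isOpen_ne.mem_nhds hz] with w hw
    exact theta_mul_left hp hp0 hw
  have := h1.unique (h2.congr_of_eventuallyEq heq)
  rw [h] at this
  simp at this
  linear_combination this

theorem theta_zpow_and_deriv_ne_zero (hp : ‖p‖ < 1) (hp0 : p ≠ 0) (m : ℤ) :
    theta (p ^ m) p = 0 ∧ deriv (fun z ↦ theta z p) (p ^ m) ≠ 0 := by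
  have step (m : ℤ) : (theta (p ^ m) p = 0 ∧ deriv (fun z ↦ theta z p) (p ^ m) ≠ 0) ↔
      (theta (p ^ (m + 1)) p = 0 ∧ deriv (fun z ↦ theta z p) (p ^ (m + 1)) ≠ 0) := by
    have hm : p ^ m ≠ 0 := zpow_ne_zero _ hp0
    have e : p ^ (m + 1) = p * p ^ m := by rw [zpow_add_one₀ hp0, mul_comm]
    have ht : theta (p * p ^ m) p = 0 ↔ theta (p ^ m) p = 0 := by
      rw [theta_mul_left hp hp0 hm]
      simp [hm]
    rw [e, ht]
    refine and_congr_right fun h0 ↦ not_congr ?_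
    have hd := mul_deriv_theta_mul_left hp hp0 hm h0
    constructor <;> intro h <;> rw [h] at hd <;> simpa [hp0, hm] using hd
  induction m using Int.induction_on with
  | zero => simpa using ⟨theta_one hp, deriv_theta_one_ne_zero hp⟩
  | succ k ih => exact (step k).1 ih
  | pred k ih => exact (step _).2 (by simpa using ih)

theorem deriv_theta_ne_zero (hp : ‖p‖ < 1) (hp0 : p ≠ 0) {z : ℂ} (hz : z ≠ 0)
    (h : theta z p = 0) : deriv (fun z ↦ theta z p) z ≠ 0 := by
  obtain ⟨m, rfl⟩ := exists_zpow_eq_of_theta_eq_zero hp hz h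
  exact (theta_zpow_and_deriv_ne_zero hp hp0 m).2

end Theta

theorem exists_differentiableOn_eq_mul {U : Set ℂ} (hU : IsOpen U) {f h : ℂ → ℂ}
    (hf : DifferentiableOn ℂ f U) (hh : DifferentiableOn ℂ h U)
    (hsimple : ∀ z ∈ U, h z = 0 → deriv h z ≠ 0) (hzero : ∀ z ∈ U, h z = 0 → f z = 0) :
    ∃ q : ℂ → ℂ, DifferentiableOn ℂ q U ∧ ∀ z ∈ U, f z = h z * q z := by
  classical
  refine ⟨fun z ↦ if h z = 0 then deriv f z / deriv h z else f z / h z, fun c hc ↦ ?_,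
    fun z hz ↦ ?_⟩
  · have hUc : U ∈ 𝓝 c := hU.mem_nhds hc
    have hhc : ContinuousAt h c := (hh.differentiableAt hUc).continuousAt
    refine DifferentiableAt.differentiableWithinAt ?_
    by_cases h0 : h c = 0
    · have hdf := ((Complex.differentiableOn_dslope hUc).2 hf).differentiableAt hUc
      have hdh := ((Complex.differentiableOn_dslope hUc).2 hh).differentiableAt hUc
      have hne : dslope h c c ≠ 0 := by simpa using hsimple c hc h0
      refine (hdf.div hdh hne).congr_of_eventuallyEq ?_
      filter_upwards [hdh.continuousAt.eventually_ne hne] with z hz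
      rcases eq_or_ne z c with rfl | hzc
      · simp [h0]
      · have e1 : f z = (z - c) * dslope f c z := by
          simpa [hzero c hc h0] using (sub_smul_dslope f c z).symm
        have e2 : h z = (z - c) * dslope h c z := by
          simpa [h0] using (sub_smul_dslope h c z).symm
        have hzc' : z - c ≠ 0 := sub_ne_zero.2 hzc
        have : h z ≠ 0 := by rw [e2]; exact mul_ne_zero hzc' hz
        rw [if_neg this, e1, e2, Pi.div_apply, mul_div_mul_left _ _ hzc']
    · refine ((hf.differentiableAt hUc).div (hh.differentiableAt hUc) h0).congr_of_eventuallyEq ?_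
      filter_upwards [hhc.eventually_ne h0] with z hz
      simp [hz]
  · by_cases h0 : h z = 0
    · simp [h0, hzero z hz h0]
    · simp only [h0, if_false]
      field_simp

theorem map_pow_mul_of_map_mul {p c : ℂ} (hp0 : p ≠ 0) {g : ℂ → ℂ}
    (hgp : ∀ z ≠ 0, g (p * z) = c * g z) (k : ℕ) {z : ℂ} (hz : z ≠ 0) :
    g (p ^ k * z) = c ^ k * g z := by
  induction k with
  | zero => simp
  | succ k ih => rw [pow_succ', mul_assoc, hgp _ (mul_ne_zero (pow_ne_zero _ hp0) hz), ih]; ring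

theorem zero_of_analyticAt_of_map_mul {p c : ℂ} (hp : ‖p‖ < 1) (hp0 : p ≠ 0) {g : ℂ → ℂ}
    (hg : AnalyticAt ℂ g 0) (hgp : ∀ z ≠ 0, g (p * z) = c * g z) (hc : ∀ m : ℕ, c ≠ p ^ m)
    {z : ℂ} (hz : z ≠ 0) : g z = 0 := by
  by_cases hc0 : c = 0
  · have := hgp (p⁻¹ * z) (mul_ne_zero (inv_ne_zero hp0) hz)
    rwa [mul_inv_cancel_left₀ hp0, hc0, zero_mul] at this
  have hev : ∀ᶠ w in 𝓝 0, g w = 0 := by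
    by_contra hne
    obtain ⟨n, h, hh, h0, heq⟩ := hg.exists_eventuallyEq_pow_smul_nonzero_iff.2 hne
    have hmul : Tendsto (fun w : ℂ ↦ p * w) (𝓝 0) (𝓝 0) := by
      simpa using (continuous_const_mul p).tendsto 0
    have hE : (fun w ↦ p ^ n * h (p * w)) =ᶠ[𝓝[≠] 0] fun w ↦ c * h w := by
      filter_upwards [self_mem_nhdsWithin, heq.filter_mono nhdsWithin_le_nhds,
        (hmul.eventually heq).filter_mono nhdsWithin_le_nhds] with w hw h1 h2
      have hw : w ≠ 0 := hw
      have h3 := hgp w hw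
      rw [h1, h2] at h3
      simp only [sub_zero, smul_eq_mul, mul_pow] at h3
      exact mul_left_cancel₀ (pow_ne_zero n hw) (by linear_combination h3)
    have hcont : ContinuousAt (fun w ↦ h (p * w)) 0 :=
      ContinuousAt.comp (f := fun w ↦ p * w) (by simpa using hh.continuousAt) (by fun_prop)
    have := ((continuousAt_const.mul hcont).eventuallyEq_nhds_iff_eventuallyEq_nhdsNE
      (continuousAt_const.mul hh.continuousAt)).1 hE
    have : p ^ n * h (p * 0) = c * h 0 := this.eq_of_nhds
    rw [mul_zero] at this
    exact hc n (mul_right_cancel₀ h0 this).symm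
  have hlim : Tendsto (fun k : ℕ ↦ p ^ k * z) atTop (𝓝 0) := by
    simpa using (tendsto_pow_atTop_nhds_zero_of_norm_lt_one hp).mul_const z
  obtain ⟨k, hk⟩ := (hlim.eventually hev).exists
  rw [map_pow_mul_of_map_mul hp0 hgp k hz] at hk
  exact (mul_eq_zero.1 hk).resolve_left (pow_ne_zero _ hc0)

theorem zero_of_map_mul_of_norm_le_one {p c : ℂ} (hp : ‖p‖ < 1) (hp0 : p ≠ 0) {g : ℂ → ℂ}
    (hg : DifferentiableOn ℂ g {0}ᶜ) (hgp : ∀ z ≠ 0, g (p * z) = c * g z) (hc1 : ‖c‖ ≤ 1)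
    (hc : ∀ m : ℕ, c ≠ p ^ m) {z : ℂ} (hz : z ≠ 0) : g z = 0 := by
  have hpn : 0 < ‖p‖ := norm_pos_iff.2 hp0
  have hcomp : IsCompact (Metric.closedBall (0 : ℂ) 1 ∩ {w | ‖p‖ ≤ ‖w‖}) :=
    (isCompact_closedBall _ _).inter_right (isClosed_le continuous_const continuous_norm)
  obtain ⟨M, hM⟩ := hcomp.exists_bound_of_continuousOn (hg.continuousOn.mono fun w hw ↦ by
    have : 0 < ‖w‖ := hpn.trans_le hw.2
    simpa using this)
  have hbdd : BddAbove (norm ∘ g '' (Metric.ball 0 1 \ {0})) := by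
    refine ⟨M, ?_⟩
    rintro _ ⟨w, ⟨hw1, hw0⟩, rfl⟩
    have hw0 : w ≠ 0 := hw0
    have hw1 : ‖w‖ < 1 := by simpa using hw1
    obtain ⟨k, hk1, hk2⟩ := exists_nat_pow_near_of_lt_one (norm_pos_iff.2 hw0) hw1.le hpn hp
    have hpk : p ^ k ≠ 0 := pow_ne_zero k hp0
    have hv : w = p ^ k * (w / p ^ k) := by field_simp
    have hvn : ‖w / p ^ k‖ = ‖w‖ / ‖p‖ ^ k := by rw [norm_div, norm_pow]
    have hb := hM (w / p ^ k) ⟨by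
      rw [mem_closedBall_zero_iff, hvn]
      exact div_le_one_of_le₀ hk2 (by positivity), by
      rw [Set.mem_ofPred_eq, hvn, le_div_iff₀ (by positivity), ← pow_succ']
      exact hk1.le⟩
    calc ‖g w‖ = ‖c‖ ^ k * ‖g (w / p ^ k)‖ := by
          conv_lhs => rw [hv, map_pow_mul_of_map_mul hp0 hgp k (div_ne_zero hw0 hpk),
            norm_mul, norm_pow]
      _ ≤ 1 * M := by
          gcongr
          exact pow_le_one₀ (norm_nonneg c) hc1
      _ = M := one_mul M
  have hball : Metric.ball (0 : ℂ) 1 ∈ 𝓝 0 := Metric.ball_mem_nhds 0 one_pos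
  have han := (Complex.differentiableOn_update_limUnder_of_bddAbove hball
    (hg.mono fun w hw ↦ hw.2) hbdd).analyticAt hball
  have := zero_of_analyticAt_of_map_mul (c := c) hp hp0 han (fun w hw ↦ by
    rw [Function.update_of_ne hw, Function.update_of_ne (mul_ne_zero hp0 hw), hgp w hw]) hc hz
  rwa [Function.update_of_ne hz] at this

theorem zero_of_map_mul {p c : ℂ} (hp : ‖p‖ < 1) (hp0 : p ≠ 0) {g : ℂ → ℂ}
    (hg : DifferentiableOn ℂ g {0}ᶜ) (hgp : ∀ z ≠ 0, g (p * z) = c * g z)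
    (hc : ∀ m : ℤ, c ≠ p ^ m) {z : ℂ} (hz : z ≠ 0) : g z = 0 := by
  obtain ⟨N, hN⟩ : ∃ N : ℕ, ‖p ^ N * c‖ ≤ 1 := by
    have : Tendsto (fun N : ℕ ↦ ‖p ^ N * c‖) atTop (𝓝 0) := by
      simpa using ((tendsto_pow_atTop_nhds_zero_of_norm_lt_one hp).mul_const c).norm
    exact (this.eventually_le_const one_pos).exists
  have := zero_of_map_mul_of_norm_le_one (g := fun w ↦ w ^ N * g w) hp hp0
    ((differentiableOn_id.pow N).mul hg)
    (fun w hw ↦ by simp only [hgp w hw]; ring) hN (fun m hm ↦ hc (m - N) (by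
      rw [zpow_sub₀ hp0, zpow_natCast, zpow_natCast, ← hm]
      field_simp)) hz
  exact (mul_eq_zero.1 this).resolve_left (pow_ne_zero N hz)

theorem theta_ne_zero {p : ℂ} (hp : ‖p‖ < 1) {z : ℂ} (hz : z ≠ 0) (h : ∀ m : ℤ, z ≠ p ^ m) :
    theta z p ≠ 0 := fun h0 ↦
  let ⟨m, hm⟩ := exists_zpow_eq_of_theta_eq_zero hp hz h0
  h m hm

theorem theta_zero_right (z : ℂ) : theta z 0 = 1 - z := by
  rw [theta, tprod_eq_mulSingle 0 fun j hj ↦ by simp [hj]]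
  simp

theorem eq_zero_of_quasiperiodic_of_zeros {ι : Type*} {p : ℂ} (hp : ‖p‖ < 1) (hp0 : p ≠ 0)
    {a : ι → ℂ} (ha : ∀ r, a r ≠ 0) (hdist : ∀ j k, j ≠ k → ∀ m : ℤ, a j / a k ≠ p ^ m)
    (s : Finset ι) {K : ℂ} (hK0 : K ≠ 0) (hK : ∀ m : ℤ, K ≠ p ^ m * ∏ k ∈ s, a k) {f : ℂ → ℂ}
    (hf : DifferentiableOn ℂ f {0}ᶜ)
    (hfp : ∀ z ≠ 0, z ^ s.card * f (p * z) = (-1) ^ s.card * K * f z)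
    (hfa : ∀ k ∈ s, f (a k) = 0) {z : ℂ} (hz : z ≠ 0) : f z = 0 := by
  classical
  induction s using Finset.induction_on generalizing K f with
  | empty => exact zero_of_map_mul hp hp0 hf (by simpa using hfp) (by simpa using hK) hz
  | insert r s hr ih =>
    have har := ha r
    have hrat (w : ℂ) (hw : w ≠ 0) : w / a r ≠ 0 := div_ne_zero hw har
    have hone (w : ℂ) (hw : w ≠ 0) : HasDerivAt (fun w ↦ theta (w / a r) p)
        (deriv (fun z ↦ theta z p) (w / a r) * (1 / a r)) w :=
      HasDerivAt.comp (h₂ := fun z ↦ theta z p) (h := fun w ↦ w / a r) w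
        (differentiableAt_theta hp (hrat w hw)).hasDerivAt ((hasDerivAt_id w).div_const _)
    have hderiv (w : ℂ) (hw : w ≠ 0) (h0 : theta (w / a r) p = 0) :
        deriv (fun z ↦ theta z p) (w / a r) * (1 / a r) ≠ 0 :=
      mul_ne_zero (deriv_theta_ne_zero hp hp0 (hrat w hw) h0) (one_div_ne_zero har)
    have hstep (w : ℂ) (hw : w ≠ 0) : f (p * w) = 0 ↔ f w = 0 := by
      have h := hfp w hw
      constructor <;> intro h0 <;> rw [h0] at h <;> simpa [hw, hK0] using h
    have hzeros (m : ℤ) : f (p ^ m * a r) = 0 := by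
      have hs (m : ℤ) : f (p ^ (m + 1) * a r) = 0 ↔ f (p ^ m * a r) = 0 := by
        rw [← hstep _ (mul_ne_zero (zpow_ne_zero m hp0) har), zpow_add_one₀ hp0, ← mul_assoc,
          mul_comm p]
      induction m using Int.induction_on with
      | zero => simpa using hfa r (Finset.mem_insert_self r s)
      | succ k ih => exact (hs k).2 ih
      | pred k ih => exact (hs _).1 (by simpa using ih)
    obtain ⟨q, hq, hfq⟩ := exists_differentiableOn_eq_mul isOpen_compl_singleton hf
      (fun w hw ↦ (hone w hw).differentiableAt.differentiableWithinAt)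
      (fun w hw h0 ↦ by rw [(hone w hw).deriv]; exact hderiv w hw h0)
      (fun w hw h0 ↦ by
        obtain ⟨m, hm⟩ := exists_zpow_eq_of_theta_eq_zero hp (hrat w hw) h0
        rw [(div_eq_iff har).1 hm]
        exact hzeros m)
    have hfq : ∀ w ≠ 0, f w = theta (w / a r) p * q w := hfq
    have hqc (w : ℂ) (hw : w ≠ 0) : ContinuousAt q w :=
      (hq.differentiableAt (isOpen_compl_singleton.mem_nhds hw)).continuousAt
    have hqp' (w : ℂ) (hw : w ≠ 0) (h0 : theta (w / a r) p ≠ 0) :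
        w ^ s.card * q (p * w) = (-1) ^ s.card * (K / a r) * q w := by
      have h := hfp w hw
      rw [hfq w hw, hfq _ (mul_ne_zero hp0 hw), mul_div_assoc, theta_mul_left hp hp0 (hrat w hw),
        Finset.card_insert_of_notMem hr] at h
      refine mul_left_cancel₀ h0 ?_
      field_simp at h ⊢
      exact mul_left_cancel₀ hw (by linear_combination -h)
    have hqp (w : ℂ) (hw : w ≠ 0) :
        w ^ s.card * q (p * w) = (-1) ^ s.card * (K / a r) * q w := by
      by_cases h0 : theta (w / a r) p = 0
      · have hcp : ContinuousAt (fun w ↦ q (p * w)) w :=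
          ContinuousAt.comp (f := fun w ↦ p * w) (hqc _ (mul_ne_zero hp0 hw)) (by fun_prop)
        have hcl : ContinuousAt (fun w ↦ w ^ s.card * q (p * w)) w :=
          (continuousAt_id.pow s.card).mul hcp
        have hcr : ContinuousAt (fun w ↦ (-1) ^ s.card * (K / a r) * q w) w :=
          continuousAt_const.mul (hqc w hw)
        refine ((hcl.eventuallyEq_nhds_iff_eventuallyEq_nhdsNE hcr).1 ?_).eq_of_nhds
        filter_upwards [(hone w hw).eventually_ne (c := 0) (hderiv w hw h0),
          (eventually_ne_nhds hw).filter_mono nhdsWithin_le_nhds] with v hv hv0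
        exact hqp' v hv0 hv
      · exact hqp' w hw h0
    have hqz := ih (div_ne_zero hK0 har) (fun m hm ↦ hK m (by
        rw [Finset.prod_insert hr, (div_eq_iff har).1 hm]; ring)) hq hqp (fun k hk ↦ by
        have hfk := hfa k (Finset.mem_insert_of_mem hk)
        rw [hfq _ (ha k)] at hfk
        exact (mul_eq_zero.1 hfk).resolve_left (theta_ne_zero hp (hrat _ (ha k))
          (hdist k r fun h ↦ hr (h ▸ hk))))
    rw [hfq z hz, hqz, mul_zero]

open Polynomial in
theorem natDegree_one_sub_C_mul_X_le (c : ℂ) : natDegree (1 - C c * X) ≤ 1 := by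
  compute_degree

open Polynomial in
theorem natDegree_prod_one_sub_C_mul_X_le {ι : Type*} (s : Finset ι) (c : ι → ℂ) :
    natDegree (∏ k ∈ s, (1 - C (c k) * X)) ≤ s.card :=
  (natDegree_prod_le _ _).trans <| by
    simpa using Finset.sum_le_card_nsmul s _ 1 fun k _ ↦ natDegree_one_sub_C_mul_X_le (c k)

open Polynomial in
theorem coeff_prod_one_sub_C_mul_X {ι : Type*} (s : Finset ι) (c : ι → ℂ) :
    coeff (∏ k ∈ s, (1 - C (c k) * X)) s.card = (-1) ^ s.card * ∏ k ∈ s, c k := by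
  have := coeff_prod_of_natDegree_le (s := s) (fun k ↦ 1 - C (c k) * X) 1
    fun k _ ↦ natDegree_one_sub_C_mul_X_le (c k)
  rw [mul_one] at this
  rw [this, ← Finset.prod_const, ← Finset.prod_mul_distrib]
  simp [coeff_one]

open Polynomial in
theorem Polynomial.eq_zero_of_coeff_card_eq_of_zeros {ι : Type*} {a : ι → ℂ} (s : Finset ι)
    (ha : ∀ r, a r ≠ 0) (hinj : Function.Injective a) {P : ℂ[X]} (hdeg : P.natDegree ≤ s.card)
    {K : ℂ} (hK : K ≠ ∏ k ∈ s, a k)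
    (hcoeff : K * P.coeff s.card = (-1) ^ s.card * P.coeff 0) (hPa : ∀ k ∈ s, P.eval (a k) = 0) :
    P = 0 := by
  classical
  have hA : ∏ k ∈ s, a k ≠ 0 := Finset.prod_ne_zero_iff.2 fun k _ ↦ ha k
  set D : ℂ[X] := ∏ k ∈ s, (1 - C (a k)⁻¹ * X) with hD
  have hP : P = C (P.coeff 0) * D := by
    refine eq_of_degree_sub_lt_of_eval_finset_eq (insert 0 (s.image a)) ?_ fun x hx ↦ ?_
    · rw [Finset.card_insert_of_notMem (by simpa using fun k _ ↦ ha k),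
        Finset.card_image_of_injective _ hinj]
      refine degree_le_natDegree.trans_lt (Nat.cast_lt.2 (Nat.lt_succ_of_le ?_))
      exact (natDegree_sub_le _ _).trans (max_le hdeg ((natDegree_C_mul_le _ _).trans
        (natDegree_prod_one_sub_C_mul_X_le s _)))
    · rcases Finset.mem_insert.1 hx with rfl | hx
      · simp [hD, eval_prod, coeff_zero_eq_eval_zero]
      · obtain ⟨k, hk, rfl⟩ := Finset.mem_image.1 hx
        rw [hPa k hk, eval_mul, hD, eval_prod, Finset.prod_eq_zero hk, mul_zero]
        simp [ha k]
  have hc : P.coeff s.card = P.coeff 0 * ((-1) ^ s.card * (∏ k ∈ s, a k)⁻¹) := by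
    conv_lhs => rw [hP, coeff_C_mul, hD, coeff_prod_one_sub_C_mul_X, Finset.prod_inv_distrib]
  have h0 : P.coeff 0 = 0 := by
    rw [hc] at hcoeff
    have h1 : (-1 : ℂ) ^ s.card ≠ 0 := by simp
    field_simp at hcoeff
    by_contra h
    exact hK (mul_right_cancel₀ h (by linear_combination hcoeff))
  rw [hP, h0, C_0, zero_mul]

/-- The difference of the two sides of the partial fraction expansion at `t = z`, multiplied by
the denominators which depend on `z` and by the theta factor of the balancing parameter. -/
noncomputable def thetaInterpolationDefect {n : ℕ} (p : ℂ) (a b : Fin n → ℂ) (z : ℂ) : ℂ :=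
  (∏ k, theta (z / b k) p) * theta ((∏ k, a k) / ∏ k, b k) p -
    ∑ r, theta (z * (∏ k, a k) / (a r * ∏ k, b k)) p *
      ((∏ j, theta (a r / b j) p) / ∏ j ∈ Finset.univ.erase r, theta (a r / a j) p) *
      ∏ k ∈ Finset.univ.erase r, theta (z / a k) p

section Interpolation

variable {n : ℕ} {p : ℂ} {a b : Fin n → ℂ}

theorem thetaInterpolationDefect_eq_zero_of_node (hp : ‖p‖ < 1) (ha : ∀ r, a r ≠ 0)
    (hdist : ∀ j k, j ≠ k → ∀ m : ℤ, a j / a k ≠ p ^ m) (s : Fin n) :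
    thetaInterpolationDefect p a b (a s) = 0 := by
  have hD : ∏ j ∈ Finset.univ.erase s, theta (a s / a j) p ≠ 0 :=
    Finset.prod_ne_zero_iff.2 fun j hj ↦
      theta_ne_zero hp (div_ne_zero (ha s) (ha j)) (hdist s j (Finset.ne_of_mem_erase hj).symm)
  rw [thetaInterpolationDefect, Finset.sum_eq_single s]
  · rw [mul_div_mul_left _ _ (ha s)]
    field_simp
    ring
  · intro r _ hr
    rw [Finset.prod_eq_zero (i := s) (f := fun k ↦ theta (a s / a k) p)
      (Finset.mem_erase.2 ⟨hr.symm, Finset.mem_univ s⟩) (by rw [div_self (ha s), theta_one hp]),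
      mul_zero]
  · simp

theorem pow_card_mul_prod_theta_mul_left {ι : Type*} (hp : ‖p‖ < 1) (hp0 : p ≠ 0) {c : ι → ℂ}
    (hc : ∀ r, c r ≠ 0) (s : Finset ι) {z : ℂ} (hz : z ≠ 0) :
    z ^ s.card * ∏ k ∈ s, theta (p * z / c k) p =
      (-1) ^ s.card * (∏ k ∈ s, c k) * ∏ k ∈ s, theta (z / c k) p := by
  rw [← Finset.prod_const, ← Finset.prod_const, ← Finset.prod_mul_distrib,
    ← Finset.prod_mul_distrib, ← Finset.prod_mul_distrib]
  refine Finset.prod_congr rfl fun k _ ↦ ?_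
  rw [mul_div_assoc, theta_mul_left hp hp0 (div_ne_zero hz (hc k))]
  have := hc k
  field_simp

theorem thetaInterpolationDefect_mul_left (hp : ‖p‖ < 1) (hp0 : p ≠ 0) (ha : ∀ r, a r ≠ 0)
    (hb : ∀ r, b r ≠ 0) {z : ℂ} (hz : z ≠ 0) :
    z ^ n * thetaInterpolationDefect p a b (p * z) =
      (-1) ^ n * (∏ k, b k) * thetaInterpolationDefect p a b z := by
  have hA : ∏ k, a k ≠ 0 := Finset.prod_ne_zero_iff.2 fun k _ ↦ ha k
  have hB : ∏ k, b k ≠ 0 := Finset.prod_ne_zero_iff.2 fun k _ ↦ hb k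
  simp only [thetaInterpolationDefect, mul_sub, Finset.mul_sum]
  congr 1
  · have := pow_card_mul_prod_theta_mul_left hp hp0 hb Finset.univ hz
    rw [Finset.card_univ, Fintype.card_fin] at this
    rw [← mul_assoc, this]
    ring
  · refine Finset.sum_congr rfl fun r _ ↦ ?_
    have har := ha r
    have hprod := pow_card_mul_prod_theta_mul_left hp hp0 ha (Finset.univ.erase r) hz
    have hn : n = (Finset.univ.erase r).card + 1 := by
      rw [Finset.card_erase_add_one (Finset.mem_univ r), Finset.card_univ, Fintype.card_fin]
    have hAr := Finset.mul_prod_erase Finset.univ a (Finset.mem_univ r)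
    have harg : p * z * (∏ k, a k) / (a r * ∏ k, b k) =
        p * (z * (∏ k, a k) / (a r * ∏ k, b k)) := by ring
    have hinv : z * (z * (∏ k, a k) / (a r * ∏ k, b k))⁻¹ * ∏ k ∈ Finset.univ.erase r, a k =
        ∏ k, b k := by
      field_simp
      exact hAr
    generalize (∏ j, theta (a r / b j) p) / ∏ j ∈ Finset.univ.erase r, theta (a r / a j) p = Q
    rw [harg, theta_mul_left hp hp0 (div_ne_zero (mul_ne_zero hz hA) (mul_ne_zero har hB))]
    generalize theta (z * (∏ k, a k) / (a r * ∏ k, b k)) p = T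
    generalize (z * (∏ k, a k) / (a r * ∏ k, b k))⁻¹ = i at hinv
    have hpow (x : ℂ) : x ^ n = x ^ (Finset.univ.erase r).card * x := by
      rw [← pow_succ, ← hn]
    rw [hpow z, hpow (-1), ← hinv]
    linear_combination (-z * i * T * Q) * hprod

theorem differentiableOn_thetaInterpolationDefect (hp : ‖p‖ < 1) (ha : ∀ r, a r ≠ 0)
    (hb : ∀ r, b r ≠ 0) : DifferentiableOn ℂ (thetaInterpolationDefect p a b) {0}ᶜ := by
  intro z hz
  have hz : z ≠ 0 := hz
  have hA : ∏ k, a k ≠ 0 := Finset.prod_ne_zero_iff.2 fun k _ ↦ ha k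
  have hB : ∏ k, b k ≠ 0 := Finset.prod_ne_zero_iff.2 fun k _ ↦ hb k
  have hdiv (c : ℂ) (hc : c ≠ 0) : DifferentiableAt ℂ (fun z ↦ theta (z / c) p) z :=
    (differentiableAt_theta hp (div_ne_zero hz hc)).fun_comp' z (differentiableAt_id.div_const c)
  have hbal (r : Fin n) :
      DifferentiableAt ℂ (fun z ↦ theta (z * (∏ k, a k) / (a r * ∏ k, b k)) p) z :=
    DifferentiableAt.fun_comp' (g := fun z ↦ theta z p)
      (f := fun z ↦ z * (∏ k, a k) / (a r * ∏ k, b k)) z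
      (differentiableAt_theta hp (div_ne_zero (mul_ne_zero hz hA) (mul_ne_zero (ha r) hB)))
      ((differentiableAt_id.mul_const _).div_const _)
  refine DifferentiableAt.differentiableWithinAt ?_
  refine ((DifferentiableAt.fun_finsetProd fun k _ ↦ hdiv _ (hb k)).mul_const _).sub
    (DifferentiableAt.fun_sum fun r _ ↦ ((hbal r).mul_const _).mul
      (DifferentiableAt.fun_finsetProd fun k _ ↦ hdiv _ (ha k)))

open Polynomial in
theorem thetaInterpolationDefect_zero_left (ha : ∀ r, a r ≠ 0) (hinj : Function.Injective a)
    (hb : ∀ r, b r ≠ 0) (hab : ∏ k, a k ≠ ∏ k, b k)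
    (hnode : ∀ s, thetaInterpolationDefect 0 a b (a s) = 0) (z : ℂ) :
    thetaInterpolationDefect 0 a b z = 0 := by
  have hB : ∏ k, b k ≠ 0 := Finset.prod_ne_zero_iff.2 fun k _ ↦ hb k
  set E : ℂ := theta ((∏ k, a k) / ∏ k, b k) 0
  set Q : Fin n → ℂ := fun r ↦
    (∏ j, theta (a r / b j) 0) / ∏ j ∈ Finset.univ.erase r, theta (a r / a j) 0 with hQ
  set P : ℂ[X] := (∏ k, (1 - C (b k)⁻¹ * X)) * C E -
    ∑ r, C (Q r) * ((1 - C ((∏ k, a k) / (a r * ∏ k, b k)) * X) *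
      ∏ k ∈ Finset.univ.erase r, (1 - C (a k)⁻¹ * X)) with hP
  have heval (z : ℂ) : P.eval z = thetaInterpolationDefect 0 a b z := by
    simp only [hP, thetaInterpolationDefect, eval_sub, eval_mul, eval_prod,
      eval_finsetSum, eval_C, eval_X, eval_one]
    congr 1
    · congr 1
      exact Finset.prod_congr rfl fun k _ ↦ by rw [theta_zero_right]; ring
    · refine Finset.sum_congr rfl fun r _ ↦ ?_
      have : ∏ k ∈ Finset.univ.erase r, (1 - (a k)⁻¹ * z) =
          ∏ k ∈ Finset.univ.erase r, theta (z / a k) 0 :=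
        Finset.prod_congr rfl fun k _ ↦ by rw [theta_zero_right]; ring
      rw [this, theta_zero_right (z * _ / _), hQ]
      ring
  have hcard : (Finset.univ : Finset (Fin n)).card = n := by simp
  have hn (r : Fin n) : 1 + (Finset.univ.erase r).card = n := by
    rw [add_comm, Finset.card_erase_add_one (Finset.mem_univ r), hcard]
  have hdeg : P.natDegree ≤ (Finset.univ : Finset (Fin n)).card := by
    refine (natDegree_sub_le _ _).trans (max_le ((natDegree_mul_C_le _ _).trans
      (natDegree_prod_one_sub_C_mul_X_le _ _)) (natDegree_sum_le_of_forall_le _ _ fun r _ ↦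
        (natDegree_C_mul_le _ _).trans (natDegree_mul_le.trans ?_)))
    exact (add_le_add (natDegree_one_sub_C_mul_X_le _)
      (natDegree_prod_one_sub_C_mul_X_le _ _)).trans_eq ((hn r).trans hcard.symm)
  have hcoeff0 : P.coeff 0 = E - ∑ r, Q r := by
    rw [coeff_zero_eq_eval_zero]
    simp [hP, eval_prod, eval_finsetSum]
  have hterm (r : Fin n) : coeff ((1 - C ((∏ k, a k) / (a r * ∏ k, b k)) * X) *
      ∏ k ∈ Finset.univ.erase r, (1 - C (a k)⁻¹ * X)) n = (-1) ^ n * (∏ k, b k)⁻¹ := by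
    have hAr := Finset.mul_prod_erase Finset.univ a (Finset.mem_univ r)
    have hAr0 : ∏ k ∈ Finset.univ.erase r, a k ≠ 0 := Finset.prod_ne_zero_iff.2 fun k _ ↦ ha k
    have har := ha r
    have hmul := coeff_mul_add_eq_of_natDegree_le
      (natDegree_one_sub_C_mul_X_le ((∏ k, a k) / (a r * ∏ k, b k)))
      (natDegree_prod_one_sub_C_mul_X_le (Finset.univ.erase r) fun k ↦ (a k)⁻¹)
    rw [hn r] at hmul
    rw [hmul, coeff_prod_one_sub_C_mul_X, Finset.prod_inv_distrib]
    have h1 : coeff (1 - C ((∏ k, a k) / (a r * ∏ k, b k)) * X) 1 =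
        -((∏ k, a k) / (a r * ∏ k, b k)) := by simp [coeff_one]
    have hpow : (-1 : ℂ) ^ n = -1 * (-1) ^ (Finset.univ.erase r).card := by
      rw [← pow_succ', add_comm, hn r]
    rw [h1, hpow, ← hAr]
    field_simp
  have hcoeff : (∏ k, b k) * P.coeff (Finset.univ : Finset (Fin n)).card =
      (-1) ^ (Finset.univ : Finset (Fin n)).card * P.coeff 0 := by
    have hlead := coeff_prod_one_sub_C_mul_X Finset.univ fun k ↦ (b k)⁻¹
    rw [hcoeff0, hcard]
    rw [hcard, Finset.prod_inv_distrib] at hlead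
    simp only [hP, coeff_sub, coeff_mul_C, finsetSum_coeff, coeff_C_mul, hlead, hterm,
      ← Finset.sum_mul]
    field_simp
  rw [← heval, Polynomial.eq_zero_of_coeff_card_eq_of_zeros Finset.univ ha hinj hdeg hab.symm hcoeff
    fun k _ ↦ by rw [heval, hnode], eval_zero]

theorem thetaInterpolationDefect_eq_zero (hp : ‖p‖ < 1) (ha : ∀ r, a r ≠ 0) (hb : ∀ r, b r ≠ 0)
    (hbal : ∀ m : ℤ, (∏ k, a k) / ∏ k, b k ≠ p ^ m)
    (hdist : ∀ j k, j ≠ k → ∀ m : ℤ, a j / a k ≠ p ^ m) {z : ℂ} (hz : z ≠ 0) :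
    thetaInterpolationDefect p a b z = 0 := by
  have hA : ∏ k, a k ≠ 0 := Finset.prod_ne_zero_iff.2 fun k _ ↦ ha k
  have hB : ∏ k, b k ≠ 0 := Finset.prod_ne_zero_iff.2 fun k _ ↦ hb k
  have hnode := thetaInterpolationDefect_eq_zero_of_node (b := b) hp ha hdist
  rcases eq_or_ne p 0 with rfl | hp0
  · refine thetaInterpolationDefect_zero_left ha (fun j k hjk ↦ ?_) hb (fun h ↦ ?_) hnode z
    · by_contra hne
      exact hdist j k hne 0 (by rw [hjk, div_self (ha k), zpow_zero])
    · exact hbal 0 (by rw [h, div_self hB, zpow_zero])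
  · refine eq_zero_of_quasiperiodic_of_zeros hp hp0 ha hdist Finset.univ hB (fun m hm ↦ ?_)
      (differentiableOn_thetaInterpolationDefect hp ha hb) (fun w hw ↦ ?_) (fun k _ ↦ hnode k) hz
    · refine hbal (-m) ?_
      rw [hm, zpow_neg]
      field_simp
    · simpa using thetaInterpolationDefect_mul_left hp hp0 ha hb hw

end Interpolation

theorem theta_partial_fraction_expansion (p : ℂ) (hp : ‖p‖ < 1) (n : ℕ)
    (t : ℂ) (a b : Fin n → ℂ) (ht : t ≠ 0) (ha : ∀ r, a r ≠ 0) (hb : ∀ r, b r ≠ 0)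
    (hbal : ∀ m : ℤ, (∏ k, a k) / ∏ k, b k ≠ p ^ m)
    (hdist : ∀ j k, j ≠ k → ∀ m : ℤ, a j / a k ≠ p ^ m)
    (hta : ∀ r, ∀ m : ℤ, t / a r ≠ p ^ m) :
    ∏ k, theta (t / b k) p / theta (t / a k) p =
      ∑ r, theta (t * (∏ k, a k) / (a r * ∏ k, b k)) p /
            (theta (t / a r) p * theta ((∏ k, a k) / ∏ k, b k) p) *
          ((∏ j, theta (a r / b j) p) /
            ∏ j ∈ Finset.univ.erase r, theta (a r / a j) p) := by
  have hE : theta ((∏ k, a k) / ∏ k, b k) p ≠ 0 :=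
    theta_ne_zero hp (div_ne_zero (Finset.prod_ne_zero_iff.2 fun k _ ↦ ha k)
      (Finset.prod_ne_zero_iff.2 fun k _ ↦ hb k)) hbal
  have hT (r : Fin n) : theta (t / a r) p ≠ 0 := theta_ne_zero hp (div_ne_zero ht (ha r)) (hta r)
  have h := thetaInterpolationDefect_eq_zero hp ha hb hbal hdist ht
  rw [thetaInterpolationDefect, sub_eq_zero, ← eq_div_iff hE, Finset.sum_div] at h
  rw [Finset.prod_div_distrib, h, Finset.sum_div]
  refine Finset.sum_congr rfl fun r _ ↦ ?_
  have hTr := hT r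
  have hP : ∏ k ∈ Finset.univ.erase r, theta (t / a k) p ≠ 0 :=
    Finset.prod_ne_zero_iff.2 fun k _ ↦ hT k
  rw [← Finset.mul_prod_erase Finset.univ (fun k ↦ theta (t / a k) p) (Finset.mem_univ r)]
  generalize (∏ j, theta (a r / b j) p) / ∏ j ∈ Finset.univ.erase r, theta (a r / a j) p = Q
  field_simp
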